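/- Let m, n ≥ 1, M = Fin m, E = Fin n, let p, q : M → E → ℝ and c : M → E → ℝ, and let μ, ν : E → ℝ. Set w i j = μ j · p i j + ν j · q i j + c i j. Suppose x̂ is feasible (x̂ i j ∈ {0,1}, ∑_{j∈E} x̂ i j ≤ 1 for each i) and minimizes ∑_{i∈M}∑_{j∈E} w i j · x i j over all feasible x. Define Δ₁ j = μ j / 2 − ∑_{i∈M} p i j · x̂ i j and Δ₂ j = ν j / 2 − ∑_{i∈M} q i j · x̂ i j. Then, with F and g as above, F(x̂) − g(μ, ν) = ∑_{j∈E} (Δ₁ j² + Δ₂ j²). -/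

import Mathlib

/-!
Completing the square in each of the loads `∑ i, p i j * x i j` and `∑ i, q i j * x i j` turns the
primal objective into the Lagrangian
`-∑ j, (μ j ^ 2 + ν j ^ 2) / 4 + ∑ i, ∑ j, w i j * x i j`
plus the sum of the squared residuals, for every matrix `x`. Minimizing the linear term over
associations decouples over the devices, and the minimum is `∑ i, min 0 (min_j w i j)`: each device
takes a cheapest server if its weight is negative, and none otherwise. At a minimizer the Lagrangian
is therefore the dual value, and the squared residuals are all that is left.
-/

namespace UserAssociation

section LinearProgram

variable {M E K : Type*} [Fintype E] [Ring K] [LinearOrder K]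

/-- A feasible point of the linear relaxation of the association constraints: `x i j` is the
fraction of device `i` assigned to server `j`, and a device may be left partly or wholly
unassigned. -/
structure IsFractionalAssociation (x : M → E → K) : Prop where
  nonneg : ∀ i j, 0 ≤ x i j
  row_sum_le_one : ∀ i, ∑ j, x i j ≤ 1

/-- A feasible association of devices `M` with servers `E`, encoded as a `{0, 1}`-valued matrix in
which every device is assigned to at most one server. -/
structure IsAssociation (x : M → E → K) : Prop where
  eq_zero_or_one : ∀ i j, x i j = 0 ∨ x i j = 1
  row_sum_le_one : ∀ i, ∑ j, x i j ≤ 1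

variable [IsOrderedRing K]

theorem IsAssociation.isFractionalAssociation {x : M → E → K} (hx : IsAssociation x) :
    IsFractionalAssociation x where
  nonneg i j := by rcases hx.eq_zero_or_one i j with h | h <;> simp [h]
  row_sum_le_one := hx.row_sum_le_one

variable [Nonempty E]

theorem min_zero_inf'_le_sum_mul (w : E → K) {y : E → K} (hy : ∀ j, 0 ≤ y j)
    (hsum : ∑ j, y j ≤ 1) :
    min 0 (Finset.univ.inf' Finset.univ_nonempty w) ≤ ∑ j, w j * y j := by
  set t := min 0 (Finset.univ.inf' Finset.univ_nonempty w)
  have ht : t ≤ 0 := min_le_left _ _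
  have htw (j : E) : t ≤ w j := (min_le_right _ _).trans (Finset.inf'_le w (Finset.mem_univ j))
  calc
    t = t * 1 := (mul_one t).symm
    _ ≤ t * ∑ j, y j := mul_le_mul_of_nonpos_left hsum ht
    _ = ∑ j, t * y j := Finset.mul_sum ..
    _ ≤ ∑ j, w j * y j := Finset.sum_le_sum fun j _ => mul_le_mul_of_nonneg_right (htw j) (hy j)

theorem exists_sum_mul_eq_min_zero_inf' (w : E → K) :
    ∃ y : E → K, (∀ j, y j = 0 ∨ y j = 1) ∧ ∑ j, y j ≤ 1 ∧
      ∑ j, w j * y j = min 0 (Finset.univ.inf' Finset.univ_nonempty w) := by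
  classical
  obtain ⟨k, -, hk⟩ := Finset.exists_mem_eq_inf' Finset.univ_nonempty w
  rw [hk]
  rcases le_total 0 (w k) with hnonneg | hnonpos
  · exact ⟨0, by simp, by simp, by simp [hnonneg]⟩
  · refine ⟨Pi.single k 1, fun j => ?_, by simp, by simp [Pi.single_apply, hnonpos]⟩
    rcases eq_or_ne j k with h | h <;> simp [h]

variable [Fintype M]

theorem exists_isAssociation_sum_mul_eq (w : M → E → K) :
    ∃ x : M → E → K, IsAssociation x ∧
      ∑ i, ∑ j, w i j * x i j = ∑ i, min 0 (Finset.univ.inf' Finset.univ_nonempty (w i)) := by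
  choose x h01 hrow hval using fun i => exists_sum_mul_eq_min_zero_inf' (w i)
  exact ⟨x, ⟨h01, hrow⟩, Finset.sum_congr rfl fun i _ => hval i⟩

theorem IsFractionalAssociation.sum_mul_eq_of_minimal {w x : M → E → K}
    (hx : IsFractionalAssociation x)
    (hmin : ∀ y, IsAssociation y → ∑ i, ∑ j, w i j * x i j ≤ ∑ i, ∑ j, w i j * y i j) :
    ∑ i, ∑ j, w i j * x i j = ∑ i, min 0 (Finset.univ.inf' Finset.univ_nonempty (w i)) := by
  obtain ⟨y, hy, hval⟩ := exists_isAssociation_sum_mul_eq w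
  refine le_antisymm ((hmin y hy).trans_eq hval) (Finset.sum_le_sum fun i _ => ?_)
  exact min_zero_inf'_le_sum_mul (w i) (hx.nonneg i) (hx.row_sum_le_one i)

end LinearProgram

section Objectives

variable {M E K : Type*}

/-- The coefficient `w i j` of `x i j` in the Lagrangian, where `μ` and `ν` are the multipliers of
the slack constraints on the `p`-loads and the `q`-loads. -/
def lagrangianWeight [CommSemiring K] (p q c : M → E → K) (μ ν : E → K) (i : M) (j : E) : K :=
  μ j * p i j + ν j * q i j + c i j

variable [Fintype M] [Fintype E]

/-- The primal objective `F` of the user-association problem: the squared `p`-loads and `q`-loads of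
the servers plus the linear cost `c` of the association `x`. -/
def primalObjective [CommSemiring K] (p q c x : M → E → K) : K :=
  ∑ j, (∑ i, p i j * x i j) ^ 2 + ∑ j, (∑ i, q i j * x i j) ^ 2 + ∑ i, ∑ j, c i j * x i j

/-- The dual function `g` of the user-association problem in closed form, after minimizing the
Lagrangian over the slacks (at `μ j ^ 2 / 4` and `ν j ^ 2 / 4`) and over the associations. -/
def dualFunction [Field K] [LinearOrder K] [Nonempty E] (p q c : M → E → K) (μ ν : E → K) : K :=
  -∑ j, (μ j ^ 2 + ν j ^ 2) / 4
    + ∑ i, min 0 (Finset.univ.inf' Finset.univ_nonempty (lagrangianWeight p q c μ ν i))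

theorem sum_lagrangianWeight_mul [CommSemiring K] (p q c x : M → E → K) (μ ν : E → K) :
    ∑ i, ∑ j, lagrangianWeight p q c μ ν i j * x i j
      = ∑ j, μ j * ∑ i, p i j * x i j + ∑ j, ν j * ∑ i, q i j * x i j
        + ∑ i, ∑ j, c i j * x i j := by
  have sum_mul_load (η : E → K) (r : M → E → K) :
      ∑ i, ∑ j, η j * r i j * x i j = ∑ j, η j * ∑ i, r i j * x i j := by
    rw [Finset.sum_comm]
    simp only [Finset.mul_sum, mul_assoc]
  simp only [lagrangianWeight, add_mul, Finset.sum_add_distrib, sum_mul_load]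

theorem sum_sq_eq_sum_half_sub_sq [Field K] [NeZero (2 : K)] (η s : E → K) :
    ∑ j, s j ^ 2 = ∑ j, (η j / 2 - s j) ^ 2 + ∑ j, η j * s j - ∑ j, η j ^ 2 / 4 := by
  have h4 : (4 : K) = 2 ^ 2 := by norm_num
  have complete_square (j : E) : s j ^ 2 = (η j / 2 - s j) ^ 2 + η j * s j - η j ^ 2 / 4 := by
    rw [h4]
    field_simp
    ring
  rw [← Finset.sum_add_distrib, ← Finset.sum_sub_distrib]
  exact Finset.sum_congr rfl fun j _ => complete_square j

theorem primalObjective_eq_lagrangian_add_sum_residual_sq [Field K] [NeZero (2 : K)]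
    (p q c x : M → E → K) (μ ν : E → K) :
    primalObjective p q c x
      = -∑ j, (μ j ^ 2 + ν j ^ 2) / 4 + ∑ i, ∑ j, lagrangianWeight p q c μ ν i j * x i j
        + ∑ j, ((μ j / 2 - ∑ i, p i j * x i j) ^ 2 + (ν j / 2 - ∑ i, q i j * x i j) ^ 2) := by
  rw [primalObjective, sum_lagrangianWeight_mul,
    sum_sq_eq_sum_half_sub_sq μ fun j => ∑ i, p i j * x i j,
    sum_sq_eq_sum_half_sub_sq ν fun j => ∑ i, q i j * x i j]
  simp only [add_div, Finset.sum_add_distrib]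
  ring

end Objectives

end UserAssociation

open UserAssociation in
theorem stmt_9_general {M E K : Type*} [Fintype M] [Fintype E] [Nonempty E]
    [Field K] [LinearOrder K] [IsStrictOrderedRing K]
    (p q c : M → E → K) (μ ν : E → K) {xhat : M → E → K} (hxhat : IsFractionalAssociation xhat)
    (hmin : ∀ x, IsAssociation x →
      ∑ i, ∑ j, lagrangianWeight p q c μ ν i j * xhat i j
        ≤ ∑ i, ∑ j, lagrangianWeight p q c μ ν i j * x i j) :
    primalObjective p q c xhat - dualFunction p q c μ ν
      = ∑ j, ((μ j / 2 - ∑ i, p i j * xhat i j) ^ 2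
          + (ν j / 2 - ∑ i, q i j * xhat i j) ^ 2) := by
  rw [primalObjective_eq_lagrangian_add_sum_residual_sq p q c xhat μ ν,
    hxhat.sum_mul_eq_of_minimal hmin, dualFunction, add_sub_cancel_left]

/-- Exact duality-gap identity for the user-association problem: if `x̂` is
feasible and minimizes `∑ w i j · x i j` over feasible `x` (where
`w i j = μ j p i j + ν j q i j + c i j`), then with the residuals
`Δ₁ j = μ j/2 − ∑_i p i j x̂ i j` and `Δ₂ j = ν j/2 − ∑_i q i j x̂ i j`,
one has `F(x̂) − g(μ, ν) = ∑_j (Δ₁ j² + Δ₂ j²)`. -/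
theorem stmt_9 (m n : ℕ) (hm : 0 < m) (hn : 0 < n)
    (p q c : Fin m → Fin n → ℝ) (μ ν : Fin n → ℝ)
    (xhat : Fin m → Fin n → ℝ)
    (hxhat01 : ∀ i j, xhat i j = 0 ∨ xhat i j = 1)
    (hxhatrow : ∀ i, ∑ j, xhat i j ≤ 1)
    (hmin : ∀ x : Fin m → Fin n → ℝ,
      (∀ i j, x i j = 0 ∨ x i j = 1) → (∀ i, ∑ j, x i j ≤ 1) →
      ∑ i, ∑ j, (μ j * p i j + ν j * q i j + c i j) * xhat i j
        ≤ ∑ i, ∑ j, (μ j * p i j + ν j * q i j + c i j) * x i j) :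
    (∑ j, (∑ i, p i j * xhat i j) ^ 2 + ∑ j, (∑ i, q i j * xhat i j) ^ 2
        + ∑ i, ∑ j, c i j * xhat i j)
      - (-∑ j, (μ j ^ 2 + ν j ^ 2) / 4
          + ∑ i, min 0 (Finset.univ.inf' ⟨⟨0, hn⟩, Finset.mem_univ _⟩
              (fun j => μ j * p i j + ν j * q i j + c i j)))
    = ∑ j, ((μ j / 2 - ∑ i, p i j * xhat i j) ^ 2
        + (ν j / 2 - ∑ i, q i j * xhat i j) ^ 2) := by
  have : Nonempty (Fin n) := ⟨⟨0, hn⟩⟩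
  exact stmt_9_general p q c μ ν
    (UserAssociation.IsAssociation.mk hxhat01 hxhatrow).isFractionalAssociation
    fun x hx => hmin x hx.eq_zero_or_one hx.row_sum_le_one
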